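/- Let V be a finite-dimensional real vector space, B a nondegenerate symmetric bilinear form on V, and R a curvature operator on (V, B). Then there exists a unique bilinear form B_𝔥 on the holonomy Lie algebra 𝔥 such that B_𝔥 A (R Z W) = B (A Z) W for all A ∈ 𝔥 and all Z, W ∈ V; moreover this form B_𝔥 is symmetric and nondegenerate. (The holonomy Lie algebra of a symmetric space carries a natural nondegenerate invariant metric, equation (13).) -/

import Mathlib

/-!
The curvature tensor `B (R X Y Z) W` has the pair symmetry `B (R X Y Z) W = B (R Z W X) Y`
(`curvature_pair_symm`).
Let `L : V ⊗ V → 𝔥` be the surjection induced by `R` (`curvatureLift`), and for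
`A ∈ 𝔥` let `E A : V ⊗ V → ℝ` be the functional `Z ⊗ W ↦ B (A Z) W` (`holonomyFunctional`). The defining property of the form says
`Bh A (L s) = E A s`, so uniqueness follows from surjectivity of `L`. Pair symmetry reads
`E (L t) s = E (L s) t`; hence `E A` vanishes on `ker L` for every `A ∈ 𝔥`, so that `E A` descends
to `𝔥`, and the resulting form is symmetric. It is nondegenerate because `E A = 0` forces
`B (A Z) W = 0` for all `Z, W`, that is, `A = 0`.
-/

/-- The holonomy Lie algebra: the span of the curvature endomorphisms. -/
def holonomySpan {V : Type*} [AddCommGroup V] [Module ℝ V]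
    (R : V →ₗ[ℝ] V →ₗ[ℝ] Module.End ℝ V) : Submodule ℝ (Module.End ℝ V) :=
  Submodule.span ℝ {T : Module.End ℝ V | ∃ X Y, R X Y = T}

theorem holonomySpan_mem {V : Type*} [AddCommGroup V] [Module ℝ V]
    (R : V →ₗ[ℝ] V →ₗ[ℝ] Module.End ℝ V) (X Y : V) : R X Y ∈ holonomySpan R :=
  Submodule.subset_span ⟨X, Y, rfl⟩

/-- Pair symmetry of a curvature tensor: the usual consequence of the first Bianchi identity and
the two skew-symmetries. -/
theorem curvature_pair_symm {V : Type*} [AddCommGroup V] [Module ℝ V]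
    (B : V →ₗ[ℝ] V →ₗ[ℝ] ℝ) (hBsymm : ∀ X Y, B X Y = B Y X)
    (R : V →ₗ[ℝ] V →ₗ[ℝ] Module.End ℝ V)
    (hRskew : ∀ X Y, R X Y = - R Y X)
    (hRskewAdj : ∀ X Y Z W, B (R X Y Z) W = - B Z (R X Y W))
    (hRbianchi : ∀ X Y Z, R X Y Z + R Y Z X + R Z X Y = 0) (X Y Z W : V) :
    B (R X Y Z) W = B (R Z W X) Y := by
  have b (X Y Z W : V) : B (R X Y Z) W + B (R Y Z X) W + B (R Z X Y) W = 0 := by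
    simpa using congrArg (fun v => B v W) (hRbianchi X Y Z)
  have s (X Y Z W : V) : B (R X Y Z) W = - B (R Y X Z) W := by
    rw [hRskew X Y]; simp
  have a (X Y Z W : V) : B (R X Y Z) W = - B (R X Y W) Z := by
    rw [hRskewAdj, hBsymm]
  -- The octahedron argument: combine the Bianchi identities over the cyclic shifts of `X, Y, Z, W`.
  linarith [b X Y Z W, b Y Z W X, b Z W X Y, b W X Y Z,
    s X Y Z W, s Y Z X W, s Z X Y W, s Y Z W X, s Z W Y X, s W Y Z X,
    s Z W X Y, s W X Z Y, s X Z W Y, s W X Y Z, s X Y W Z, s Y W X Z,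
    a X Y Z W, a Y Z X W, a Z X Y W, a W Y Z X, a Z W X Y, a W X Z Y, a X Z W Y, a Y W X Z]

open scoped TensorProduct in
/-- The surjection `V ⊗ V → 𝔥` sending `X ⊗ Y` to `R X Y`. -/
noncomputable def curvatureLift {V : Type*} [AddCommGroup V] [Module ℝ V]
    (R : V →ₗ[ℝ] V →ₗ[ℝ] Module.End ℝ V) : V ⊗[ℝ] V →ₗ[ℝ] holonomySpan R :=
  (TensorProduct.lift R).codRestrict (holonomySpan R) fun t => by
    induction t with
    | zero => simp
    | tmul X Y => simpa using holonomySpan_mem R X Y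
    | add x y hx hy => simpa using add_mem hx hy

theorem curvatureLift_tmul {V : Type*} [AddCommGroup V] [Module ℝ V]
    (R : V →ₗ[ℝ] V →ₗ[ℝ] Module.End ℝ V) (X Y : V) :
    curvatureLift R (X ⊗ₜ Y) = ⟨R X Y, holonomySpan_mem R X Y⟩ := by
  apply Subtype.ext
  simp [curvatureLift]

theorem curvatureLift_surjective {V : Type*} [AddCommGroup V] [Module ℝ V]
    (R : V →ₗ[ℝ] V →ₗ[ℝ] Module.End ℝ V) : Function.Surjective (curvatureLift R) := by
  rintro ⟨A, hA⟩
  suffices h : ∃ t, ((curvatureLift R t : holonomySpan R) : Module.End ℝ V) = A by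
    obtain ⟨t, ht⟩ := h
    exact ⟨t, Subtype.ext ht⟩
  have hle : holonomySpan R ≤ LinearMap.range ((holonomySpan R).subtype ∘ₗ curvatureLift R) := by
    refine Submodule.span_le.2 ?_
    rintro _ ⟨X, Y, rfl⟩
    exact ⟨X ⊗ₜ Y, by simp [curvatureLift_tmul]⟩
  exact hle hA

open scoped TensorProduct in
/-- The linear map sending `A ∈ 𝔥` to the functional `Z ⊗ W ↦ B (A Z) W` on `V ⊗ V`. -/
noncomputable def holonomyFunctional {V : Type*} [AddCommGroup V] [Module ℝ V]
    (B : V →ₗ[ℝ] V →ₗ[ℝ] ℝ) (R : V →ₗ[ℝ] V →ₗ[ℝ] Module.End ℝ V) :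
    holonomySpan R →ₗ[ℝ] V ⊗[ℝ] V →ₗ[ℝ] ℝ where
  toFun A := TensorProduct.lift (B ∘ₗ (A : Module.End ℝ V))
  map_add' A A' := by ext; simp
  map_smul' c A := by ext; simp

theorem holonomyFunctional_tmul {V : Type*} [AddCommGroup V] [Module ℝ V]
    (B : V →ₗ[ℝ] V →ₗ[ℝ] ℝ) (R : V →ₗ[ℝ] V →ₗ[ℝ] Module.End ℝ V)
    (A : holonomySpan R) (Z W : V) :
    holonomyFunctional B R A (Z ⊗ₜ W) = B ((A : Module.End ℝ V) Z) W := by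
  simp [holonomyFunctional]

open scoped TensorProduct in
/-- Pair symmetry, extended bilinearly to `V ⊗ V`; in particular the functional of any `A ∈ 𝔥` vanishes on
the kernel of `curvatureLift R`. -/
theorem holonomyFunctional_symm {V : Type*} [AddCommGroup V] [Module ℝ V]
    (B : V →ₗ[ℝ] V →ₗ[ℝ] ℝ) (R : V →ₗ[ℝ] V →ₗ[ℝ] Module.End ℝ V)
    (hpair : ∀ X Y Z W, B (R X Y Z) W = B (R Z W X) Y) (t s : V ⊗[ℝ] V) :
    holonomyFunctional B R (curvatureLift R t) s =
      holonomyFunctional B R (curvatureLift R s) t := by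
  induction t with
  | zero => simp
  | add x y hx hy => simp [hx, hy]
  | tmul X Y =>
    induction s with
    | zero => simp
    | add x y hx hy => simp [hx, hy]
    | tmul Z W => simp [curvatureLift_tmul, holonomyFunctional_tmul, hpair X Y Z W]

open scoped TensorProduct in
/-- A form with the defining property on generators satisfies it on all of `V ⊗ V`. -/
theorem holonomyForm_apply_curvatureLift {V : Type*} [AddCommGroup V] [Module ℝ V]
    (B : V →ₗ[ℝ] V →ₗ[ℝ] ℝ) (R : V →ₗ[ℝ] V →ₗ[ℝ] Module.End ℝ V)
    (Bh : holonomySpan R →ₗ[ℝ] holonomySpan R →ₗ[ℝ] ℝ)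
    (h : ∀ (A : holonomySpan R) (Z W : V),
      Bh A ⟨R Z W, holonomySpan_mem R Z W⟩ = B ((A : Module.End ℝ V) Z) W)
    (A : holonomySpan R) (t : V ⊗[ℝ] V) :
    Bh A (curvatureLift R t) = holonomyFunctional B R A t := by
  induction t with
  | zero => simp
  | add x y hx hy => simp [hx, hy]
  | tmul X Y => rw [curvatureLift_tmul, h, holonomyFunctional_tmul]

/-- The holonomy Lie algebra of a symmetric space carries a unique bilinear form
satisfying B_𝔥(A, R(Z,W)) = B(A Z, W); it is symmetric and nondegenerate (eq. (13)). -/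
theorem holonomy_metric_exists_unique
    {V : Type*} [AddCommGroup V] [Module ℝ V] [FiniteDimensional ℝ V]
    (B : V →ₗ[ℝ] V →ₗ[ℝ] ℝ)
    (hBsymm : ∀ X Y, B X Y = B Y X)
    (hBnd : ∀ X, (∀ Y, B X Y = 0) → X = 0)
    (R : V →ₗ[ℝ] V →ₗ[ℝ] Module.End ℝ V)
    (hRskew : ∀ X Y, R X Y = - R Y X)
    (hRskewAdj : ∀ X Y Z W, B (R X Y Z) W = - B Z (R X Y W))
    (hRbianchi : ∀ X Y Z, R X Y Z + R Y Z X + R Z X Y = 0) :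
    (∃! Bh : ↥(holonomySpan R) →ₗ[ℝ] ↥(holonomySpan R) →ₗ[ℝ] ℝ,
        ∀ (A : ↥(holonomySpan R)) (Z W : V),
          Bh A ⟨R Z W, holonomySpan_mem R Z W⟩ = B ((A : Module.End ℝ V) Z) W) ∧
    (∀ Bh : ↥(holonomySpan R) →ₗ[ℝ] ↥(holonomySpan R) →ₗ[ℝ] ℝ,
        (∀ (A : ↥(holonomySpan R)) (Z W : V),
          Bh A ⟨R Z W, holonomySpan_mem R Z W⟩ = B ((A : Module.End ℝ V) Z) W) →
        (∀ A A', Bh A A' = Bh A' A) ∧ (∀ A, (∀ A', Bh A A' = 0) → A = 0)) := by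
  have hpair := curvature_pair_symm B hBsymm R hRskew hRskewAdj hRbianchi
  have hsurj := curvatureLift_surjective R
  refine ⟨?_, fun Bh h => ⟨fun A A' => ?_, fun A hA => ?_⟩⟩
  · obtain ⟨g, hg⟩ := (curvatureLift R).exists_rightInverse_of_surjective
      (LinearMap.range_eq_top.2 hsurj)
    -- The choice of the section `g` is immaterial, as each functional `E A` kills
    -- the kernel of `curvatureLift R`.
    refine ⟨(holonomyFunctional B R).compl₂ g, fun A Z W => ?_, fun Bh h => ?_⟩
    · obtain ⟨t, rfl⟩ := hsurj A
      rw [LinearMap.compl₂_apply, holonomyFunctional_symm B R hpair,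
        show curvatureLift R (g ⟨R Z W, holonomySpan_mem R Z W⟩) = _ from
          LinearMap.congr_fun hg _, LinearMap.id_apply, ← curvatureLift_tmul,
        holonomyFunctional_symm B R hpair, holonomyFunctional_tmul]
    · ext A A'
      rw [LinearMap.compl₂_apply, ← holonomyForm_apply_curvatureLift B R Bh h,
        show curvatureLift R (g A') = A' from LinearMap.congr_fun hg A']
  · obtain ⟨t, rfl⟩ := hsurj A
    obtain ⟨s, rfl⟩ := hsurj A'
    rw [holonomyForm_apply_curvatureLift B R Bh h, holonomyForm_apply_curvatureLift B R Bh h,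
      holonomyFunctional_symm B R hpair]
  · apply Subtype.ext
    ext Z
    exact hBnd _ fun W => by rw [← h, hA]
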